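/- arXiv:1705.10115 — 2 statements merged into one kernel-verified Lean document; each statement's English description precedes it below -/
import Mathlib

section
/- Let φ₁ and φ₂ be sentences of relational first-order logic with equality and let Σ be a signature. If for every first-order sentence ψ with sig(ψ) ⊆ Σ it holds that φ₂ ⊨ ψ implies φ₁ ⊨ ψ (i.e., φ₁ FO(Σ)-entails φ₂), then for every first-order sentence ψ with sig(ψ) ∩ sig(φ₂) ⊆ Σ it holds that φ₂ ⊨ ψ implies φ₁ ⊨ ψ (i.e., φ₁ strongly FO(Σ)-entails φ₂). (This is the instance for full first-order logic of: in any fragment enjoying Craig interpolation, Σ-entailment implies strong Σ-entailment; it follows using the Craig interpolation theorem for first-order logic.) -/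
/-! Core: relational first-order logic with equality, without function symbols
or constants, over an arbitrary signature of predicates with arities. -/

namespace FOG

/-- a relational vocabulary: predicate symbols with arities -/
structure Sig where
  Pred : Type
  ar : Pred → ℕ

/-- first-order formulas (with block quantifiers and `ℕ`-indexed variables) -/
inductive Fml (σ : Sig) : Type
  | rel (p : σ.Pred) (ts : Fin (σ.ar p) → ℕ)
  | eqv (i j : ℕ)
  | fls
  | neg (φ : Fml σ)
  | conj (φ ψ : Fml σ)
  | disj (φ ψ : Fml σ)
  | impl (φ ψ : Fml σ)
  | all (vs : List ℕ) (φ : Fml σ)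
  | ex (vs : List ℕ) (φ : Fml σ)

namespace Fml

variable {σ : Sig}

def free : Fml σ → Set ℕ
  | rel _ ts => Set.range ts
  | eqv i j => {i, j}
  | fls => ∅
  | neg φ => φ.free
  | conj φ ψ => φ.free ∪ ψ.free
  | disj φ ψ => φ.free ∪ ψ.free
  | impl φ ψ => φ.free ∪ ψ.free
  | all vs φ => φ.free \ {i | i ∈ vs}
  | ex vs φ => φ.free \ {i | i ∈ vs}

def IsSentence (φ : Fml σ) : Prop := φ.free = ∅

/-- the predicates occurring in a formula (equality is a logical symbol and
never part of a signature) -/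
def sig : Fml σ → Set σ.Pred
  | rel p _ => {p}
  | eqv _ _ => ∅
  | fls => ∅
  | neg φ => φ.sig
  | conj φ ψ => φ.sig ∪ ψ.sig
  | disj φ ψ => φ.sig ∪ ψ.sig
  | impl φ ψ => φ.sig ∪ ψ.sig
  | all _ φ => φ.sig
  | ex _ φ => φ.sig

def IsAtom : Fml σ → Prop
  | rel _ _ => True
  | eqv _ _ => True
  | _ => False

end Fml

structure Str (σ : Sig) where
  Dom : Type
  nonempty : Nonempty Dom
  rel : (p : σ.Pred) → (Fin (σ.ar p) → Dom) → Prop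

def Sat {σ : Sig} (A : Str σ) : Fml σ → (ℕ → A.Dom) → Prop
  | .rel p ts, v => A.rel p (fun i => v (ts i))
  | .eqv i j, v => v i = v j
  | .fls, _ => False
  | .neg φ, v => ¬ Sat A φ v
  | .conj φ ψ, v => Sat A φ v ∧ Sat A ψ v
  | .disj φ ψ, v => Sat A φ v ∨ Sat A ψ v
  | .impl φ ψ, v => Sat A φ v → Sat A ψ v
  | .all vs φ, v => ∀ v' : ℕ → A.Dom, (∀ i, i ∉ vs → v' i = v i) → Sat A φ v'
  | .ex vs φ, v => ∃ v' : ℕ → A.Dom, (∀ i, i ∉ vs → v' i = v i) ∧ Sat A φ v'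

def SatS {σ : Sig} (A : Str σ) (φ : Fml σ) : Prop := ∀ v, Sat A φ v

def Entails {σ : Sig} (φ ψ : Fml σ) : Prop := ∀ A : Str σ, SatS A φ → SatS A ψ

def Satisfiable {σ : Sig} (φ : Fml σ) : Prop := ∃ A : Str σ, SatS A φ

/-- The guarded fragment GF: quantification only in the patterns
`∀ȳ (α(x̄,ȳ) → φ(x̄,ȳ))` and `∃ȳ (α(x̄,ȳ) ∧ φ(x̄,ȳ))`, where the guard `α` is an
atomic formula containing all the variables of `x̄,ȳ`. -/
inductive IsGF {σ : Sig} : Fml σ → Prop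
  | rel (p : σ.Pred) (ts : Fin (σ.ar p) → ℕ) : IsGF (.rel p ts)
  | eqv (i j : ℕ) : IsGF (.eqv i j)
  | fls : IsGF .fls
  | neg {φ} : IsGF φ → IsGF (.neg φ)
  | conj {φ ψ} : IsGF φ → IsGF ψ → IsGF (.conj φ ψ)
  | disj {φ ψ} : IsGF φ → IsGF ψ → IsGF (.disj φ ψ)
  | impl {φ ψ} : IsGF φ → IsGF ψ → IsGF (.impl φ ψ)
  | allG {vs : List ℕ} {α φ : Fml σ} :
      α.IsAtom → IsGF φ → φ.free ∪ {i | i ∈ vs} ⊆ α.free →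
      IsGF (.all vs (.impl α φ))
  | exG {vs : List ℕ} {α φ : Fml σ} :
      α.IsAtom → IsGF φ → φ.free ∪ {i | i ∈ vs} ⊆ α.free →
      IsGF (.ex vs (.conj α φ))

/-- `φ₁` GF(Σ)-entails `φ₂` -/
def GFEntails {σ : Sig} (Sg : Set σ.Pred) (φ₁ φ₂ : Fml σ) : Prop :=
  ∀ ψ : Fml σ, IsGF ψ → ψ.IsSentence → ψ.sig ⊆ Sg →
    Entails φ₂ ψ → Entails φ₁ ψ

/-- `φ₁` strongly GF(Σ)-entails `φ₂` -/
def StrongGFEntails {σ : Sig} (Sg : Set σ.Pred) (φ₁ φ₂ : Fml σ) : Prop :=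
  ∀ Sg' : Set σ.Pred, Sg'.Finite → Sg' ∩ φ₂.sig ⊆ Sg → GFEntails Sg' φ₁ φ₂

end FOG

namespace FOG


open Fml

variable {σ : Sig}

def subs : Fml σ → Set (Fml σ)
  | .rel p ts => {.rel p ts}
  | .eqv i j => {.eqv i j}
  | .fls => {.fls}
  | .neg φ => {.neg φ} ∪ subs φ
  | .conj φ ψ => {.conj φ ψ} ∪ (subs φ ∪ subs ψ)
  | .disj φ ψ => {.disj φ ψ} ∪ (subs φ ∪ subs ψ)
  | .impl φ ψ => {.impl φ ψ} ∪ (subs φ ∪ subs ψ)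
  | .all vs φ => {.all vs φ} ∪ subs φ
  | .ex vs φ => {.ex vs φ} ∪ subs φ

theorem subs_finite (φ : Fml σ) : (subs φ).Finite := by
  induction φ <;> simp_all [subs]

theorem self_subs (φ : Fml σ) : φ ∈ subs φ := by
  cases φ <;> simp [subs]

theorem free_finite (φ : Fml σ) : φ.free.Finite := by
  induction φ with
  | rel p ts => exact Set.finite_range ts
  | all vs φ ih => exact ih.subset Set.diff_subset
  | ex vs φ ih => exact ih.subset Set.diff_subset
  | _ => simp_all [Fml.free]

theorem sig_finite (φ : Fml σ) : φ.sig.Finite := by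
  induction φ <;> simp_all [Fml.sig]

theorem sat_congr (A : Str σ) (φ : Fml σ) : ∀ v v' : ℕ → A.Dom,
    (∀ i ∈ φ.free, v i = v' i) → Sat A φ v → Sat A φ v' := by
  classical
  have key : ∀ v v' : ℕ → A.Dom,
      (∀ i ∈ φ.free, v i = v' i) → (Sat A φ v ↔ Sat A φ v') := by
    induction φ with
    | rel p ts =>
      intro v v' h
      have : (fun i => v (ts i)) = fun i => v' (ts i) := by
        funext i; exact h _ ⟨i, rfl⟩
      simp [Sat, this]
    | eqv i j =>
      intro v v' h
      have h1 := h i (by simp [Fml.free])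
      have h2 := h j (by simp [Fml.free])
      simp [Sat, h1, h2]
    | fls => intros; simp [Sat]
    | neg φ ih => intro v v' h; simp only [Sat]; rw [ih v v' h]
    | conj φ ψ ih1 ih2 =>
      intro v v' h; simp only [Sat]
      rw [ih1 v v' (fun i hi => h i (Or.inl hi)), ih2 v v' (fun i hi => h i (Or.inr hi))]
    | disj φ ψ ih1 ih2 =>
      intro v v' h; simp only [Sat]
      rw [ih1 v v' (fun i hi => h i (Or.inl hi)), ih2 v v' (fun i hi => h i (Or.inr hi))]
    | impl φ ψ ih1 ih2 =>
      intro v v' h; simp only [Sat]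
      rw [ih1 v v' (fun i hi => h i (Or.inl hi)), ih2 v v' (fun i hi => h i (Or.inr hi))]
    | all vs φ ih =>
      have aux : ∀ v v' : ℕ → A.Dom, (∀ i ∈ (Fml.all vs φ).free, v i = v' i) →
          Sat A (.all vs φ) v → Sat A (.all vs φ) v' := by
        intro v v' h hs w hw
        refine (ih (fun i => if i ∈ vs then w i else v i) w ?_).1 (hs _ ?_)
        · intro i hi
          by_cases hv : i ∈ vs
          · simp [hv]
          · simp only [hv, if_false]; rw [hw i hv]; exact h i ⟨hi, hv⟩
        · intro i hi; simp [hi]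
      intro v v' h
      exact ⟨aux v v' h, aux v' v (fun i hi => (h i hi).symm)⟩
    | ex vs φ ih =>
      have aux : ∀ v v' : ℕ → A.Dom, (∀ i ∈ (Fml.ex vs φ).free, v i = v' i) →
          Sat A (.ex vs φ) v → Sat A (.ex vs φ) v' := by
        rintro v v' h ⟨w, hw, hs⟩
        refine ⟨fun i => if i ∈ vs then w i else v' i, ?_, (ih w _ ?_).1 hs⟩
        · intro i hi; simp [hi]
        · intro i hi
          by_cases hv : i ∈ vs
          · simp [hv]
          · simp only [hv, if_false]; rw [hw i hv]; exact h i ⟨hi, hv⟩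
      intro v v' h
      exact ⟨aux v v' h, aux v' v (fun i hi => (h i hi).symm)⟩
  intro v v' h
  exact (key v v' h).1

def SProp (σ : Sig) := (A : Str σ) → (ℕ → A.Dom) → Prop

def Supp (α : SProp σ) : Prop :=
  ∃ N : ℕ, ∀ (A : Str σ) (v v' : ℕ → A.Dom), (∀ i, i < N → v i = v' i) → α A v → α A v'

def Le (α β : SProp σ) : Prop := ∀ A v, α A v → β A v

def Ent (α : SProp σ) (φ : Fml σ) (ρ : ℕ → ℕ) : Prop :=
  ∀ A v, α A v → Sat A φ (fun i => v (ρ i))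

structure Good (C : Set σ.Pred) (α β : SProp σ) : Prop where
  s1 : Supp α
  s2 : Supp β
  insep : ∀ χ : Fml σ, χ.sig ⊆ C → Ent α χ id → Ent β (.neg χ) id → False

theorem Good.symm {C : Set σ.Pred} {α β : SProp σ} (h : Good C α β) : Good C β α where
  s1 := h.s2
  s2 := h.s1
  insep χ hC h1 h2 := h.insep (.neg χ) hC h2
    (fun A v hv => by simpa [Sat] using h1 A v hv)

theorem Good.sat {C : Set σ.Pred} {α β : SProp σ} (h : Good C α β) : ∃ A v, α A v := by
  by_contra hc
  push Not at hc
  exact h.insep .fls (by simp [Fml.sig]) (fun A v hv => (hc A v hv).elim)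
    (fun A v hv => by simp [Sat])

theorem exists_bound (S : Set ℕ) (h : S.Finite) : ∃ N, ∀ i ∈ S, i < N := by
  obtain ⟨N, hN⟩ := h.bddAbove
  exact ⟨N + 1, fun i hi => Nat.lt_succ_of_le (hN hi)⟩

theorem supp_and {α : SProp σ} (h : Supp α) (θ : Fml σ) (ρ : ℕ → ℕ) :
    Supp (fun A v => α A v ∧ Sat A θ (fun i => v (ρ i))) := by
  obtain ⟨N, hN⟩ := h
  obtain ⟨K, hK⟩ := exists_bound (ρ '' θ.free) ((free_finite θ).image _)
  refine ⟨max N K, fun A v v' hv => ?_⟩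
  rintro ⟨h1, h2⟩
  refine ⟨hN A v v' (fun i hi => hv i (lt_max_of_lt_left hi)) h1, sat_congr A θ _ _ ?_ h2⟩
  intro i hi
  exact hv _ (lt_max_of_lt_right (hK _ ⟨i, hi, rfl⟩))

theorem decide_one {C : Set σ.Pred} {α β : SProp σ} (h : Good C α β) (φ : Fml σ) (ρ : ℕ → ℕ) :
    ∃ α', Good C α' β ∧ Le α' α ∧ (Ent α' φ ρ ∨ Ent α' (.neg φ) ρ) := by
  by_cases h1 : Good C (fun A v => α A v ∧ Sat A φ (fun i => v (ρ i))) β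
  · exact ⟨_, h1, fun A v hv => hv.1, Or.inl fun A v hv => hv.2⟩
  by_cases h2 : Good C (fun A v => α A v ∧ Sat A (.neg φ) (fun i => v (ρ i))) β
  · exact ⟨_, h2, fun A v hv => hv.1, Or.inr fun A v hv => hv.2⟩
  exfalso
  have e1 : ∃ χ : Fml σ, χ.sig ⊆ C ∧
      Ent (fun A v => α A v ∧ Sat A φ (fun i => v (ρ i))) χ id ∧ Ent β (.neg χ) id := by
    by_contra hc
    exact h1 ⟨supp_and h.s1 _ _, h.s2, fun χ a b c => hc ⟨χ, a, b, c⟩⟩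
  have e2 : ∃ χ : Fml σ, χ.sig ⊆ C ∧
      Ent (fun A v => α A v ∧ Sat A (.neg φ) (fun i => v (ρ i))) χ id ∧ Ent β (.neg χ) id := by
    by_contra hc
    exact h2 ⟨supp_and h.s1 _ _, h.s2, fun χ a b c => hc ⟨χ, a, b, c⟩⟩
  obtain ⟨χ, a1, b1, c1⟩ := e1
  obtain ⟨χ', a2, b2, c2⟩ := e2
  refine h.insep (.disj χ χ') (Set.union_subset a1 a2) ?_ ?_
  · intro A v hv
    by_cases hs : Sat A φ (fun i => v (ρ i))
    · exact Or.inl (b1 A v ⟨hv, hs⟩)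
    · exact Or.inr (b2 A v ⟨hv, hs⟩)
  · intro A v hv
    rintro (hs | hs)
    · exact c1 A v hv hs
    · exact c2 A v hv hs

theorem witness_one {C : Set σ.Pred} {α β : SProp σ} (h : Good C α β) (θ : Fml σ) (ρ : ℕ → ℕ)
    (hρ : ∃ K, ∀ i, ρ i < K) (vs : List ℕ)
    (hw : ∀ (A : Str σ) (v : ℕ → A.Dom), α A v →
      ∃ v' : ℕ → A.Dom, (∀ i, i ∉ vs → v' i = v (ρ i)) ∧ Sat A θ v') :
    ∃ α', Good C α' β ∧ Le α' α ∧ ∃ ρ' : ℕ → ℕ, (∀ i, i ∉ vs → ρ' i = ρ i) ∧ Ent α' θ ρ' := by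
  classical
  obtain ⟨K, hK⟩ := hρ
  obtain ⟨N1, hN1⟩ := h.s1
  obtain ⟨N2, hN2⟩ := h.s2
  set N := max K (max N1 N2) with hN
  have k0 : K ≤ N := le_max_left _ _
  have k1 : N1 ≤ N := by omega
  have k2 : N2 ≤ N := by omega
  set ρ' : ℕ → ℕ := fun i => if i ∈ vs then N + i else ρ i with hρ'
  refine ⟨fun A v => α A v ∧ Sat A θ (fun i => v (ρ' i)), ⟨supp_and h.s1 _ _, h.s2, ?_⟩,
    fun A v hv => hv.1, ρ', fun i hi => by simp [hρ', hi], fun A v hv => hv.2⟩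
  intro χ hC e1 e2
  have hbelow : ∀ i, i < N → i ∉ vs.map (N + ·) := by
    intro i hi hm
    obtain ⟨j, _, hj⟩ := List.mem_map.1 hm
    omega
  refine h.insep (.ex (vs.map (N + ·)) χ) hC ?_ ?_
  · intro A v hv
    obtain ⟨v', h1, h2⟩ := hw A v hv
    set v'' : ℕ → A.Dom := fun j => if j ∈ vs.map (N + ·) then v' (j - N) else v j with hv''
    refine ⟨v'', fun i hi => by simp only [hv'', hi, if_false]; rfl, e1 A v'' ⟨?_, ?_⟩⟩
    · refine hN1 A v v'' (fun i hi => ?_) hv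
      simp only [hv'', hbelow i (by omega), if_false]
    · have : (fun i => v'' (ρ' i)) = v' := by
        funext i
        by_cases hi : i ∈ vs
        · have : N + i ∈ vs.map (N + ·) := List.mem_map.2 ⟨i, hi, rfl⟩
          simp only [hρ', hi, if_true, hv'', this]
          congr 1; omega
        · have := hbelow (ρ i) (lt_of_lt_of_le (hK i) k0)
          simp only [hρ', hi, if_false, hv'', this]
          exact (h1 i hi).symm
      show Sat A θ (fun i => v'' (ρ' i))
      rw [this]; exact h2
  · intro A v hv
    rintro ⟨v'', h1, h2⟩
    refine e2 A v'' (hN2 A v v'' (fun i hi => ?_) hv) h2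
    exact (h1 i (hbelow i (by omega))).symm

structure Dec (α : SProp σ) (φ : Fml σ) (ρ : ℕ → ℕ) : Prop where
  dec : Ent α φ ρ ∨ Ent α (.neg φ) ρ
  wex : ∀ vs θ, φ = .ex vs θ → Ent α φ ρ →
    ∃ ρ' : ℕ → ℕ, (∀ i, i ∉ vs → ρ' i = ρ i) ∧ Ent α θ ρ'
  wall : ∀ vs θ, φ = .all vs θ → Ent α (.neg φ) ρ →
    ∃ ρ' : ℕ → ℕ, (∀ i, i ∉ vs → ρ' i = ρ i) ∧ Ent α (.neg θ) ρ'

theorem Ent.mono {α α' : SProp σ} (h : Le α' α) {φ : Fml σ} {ρ : ℕ → ℕ} (e : Ent α φ ρ) :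
    Ent α' φ ρ := fun A v hv => e A v (h A v hv)

theorem Ent.contra {C : Set σ.Pred} {α β : SProp σ} (h : Good C α β) {φ : Fml σ} {ρ : ℕ → ℕ}
    (e : Ent α φ ρ) (e' : Ent α (.neg φ) ρ) : False := by
  obtain ⟨A, v, hv⟩ := h.sat
  exact e' A v hv (e A v hv)

theorem step_one {C : Set σ.Pred} {α β : SProp σ} (h : Good C α β) (φ : Fml σ) (ρ : ℕ → ℕ)
    (hρ : ∃ K, ∀ i, ρ i < K) : ∃ α', Good C α' β ∧ Le α' α ∧ Dec α' φ ρ := by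
  obtain ⟨α1, g1, l1, d⟩ := decide_one h φ ρ
  by_cases hex : ∃ vs θ, φ = .ex vs θ ∧ Ent α1 φ ρ
  · obtain ⟨vs, θ, rfl, he⟩ := hex
    obtain ⟨α2, g2, l2, ρ', hr, hρ'⟩ := witness_one g1 θ ρ hρ vs (fun A v hv => he A v hv)
    refine ⟨α2, g2, fun A v hv => l1 A v (l2 A v hv), Or.inl (he.mono l2), ?_, ?_⟩
    · intro vs' θ' heq _
      cases heq
      exact ⟨ρ', hr, hρ'⟩
    · intro vs' θ' heq; cases heq
  by_cases hall : ∃ vs θ, φ = .all vs θ ∧ Ent α1 (.neg φ) ρ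
  · obtain ⟨vs, θ, rfl, he⟩ := hall
    obtain ⟨α2, g2, l2, ρ', hr, hρ'⟩ := witness_one g1 (.neg θ) ρ hρ vs (fun A v hv => by
      have := he A v hv
      simp only [Sat] at this ⊢
      push Not at this
      exact this)
    refine ⟨α2, g2, fun A v hv => l1 A v (l2 A v hv), Or.inr (he.mono l2), ?_, ?_⟩
    · intro vs' θ' heq; cases heq
    · intro vs' θ' heq _
      cases heq
      exact ⟨ρ', hr, hρ'⟩
  · exact ⟨α1, g1, l1, d, fun vs θ he h' => (hex ⟨vs, θ, he, h'⟩).elim,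
      fun vs θ he h' => (hall ⟨vs, θ, he, h'⟩).elim⟩

theorem Dec.mono {C : Set σ.Pred} {α α' β : SProp σ} {φ : Fml σ} {ρ : ℕ → ℕ} (d : Dec α φ ρ)
    (h : Le α' α) (g : Good C α' β) : Dec α' φ ρ where
  dec := d.dec.imp (Ent.mono h) (Ent.mono h)
  wex vs θ he e := by
    rcases d.dec with h1 | h1
    · obtain ⟨ρ', a, b⟩ := d.wex vs θ he h1
      exact ⟨ρ', a, b.mono h⟩
    · exact (Ent.contra g e (h1.mono h)).elim
  wall vs θ he e := by
    rcases d.dec with h1 | h1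
    · exact (Ent.contra g (h1.mono h) e).elim
    · obtain ⟨ρ', a, b⟩ := d.wall vs θ he h1
      exact ⟨ρ', a, b.mono h⟩

def St (C : Set σ.Pred) := {p : SProp σ × SProp σ // Good C p.1 p.2}

theorem step_two {C : Set σ.Pred} (s : St C) (φ : Fml σ) (ρ : ℕ → ℕ)
    (hρ : ∃ K, ∀ i, ρ i < K) : ∃ s' : St C, Le s'.1.1 s.1.1 ∧ Le s'.1.2 s.1.2 ∧
      Dec s'.1.1 φ ρ ∧ Dec s'.1.2 φ ρ := by
  obtain ⟨α, g, l, d⟩ := step_one s.2 φ ρ hρ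
  obtain ⟨β, g', l', d'⟩ := step_one g.symm φ ρ hρ
  exact ⟨⟨(α, β), g'.symm⟩, l, l', d, d'⟩

def env (L : List ℕ) : ℕ → ℕ := fun i => L.getD i 0

theorem env_bdd (L : List ℕ) : ∃ K, ∀ i, env L i < K := by
  refine ⟨L.sum + 1, fun i => Nat.lt_succ_of_le ?_⟩
  by_cases hi : i < L.length
  · have : env L i = L[i] := by simp [env, hi]
    rw [this]
    exact List.le_sum_of_mem (List.getElem_mem hi)
  · simp [env, not_lt.1 hi]

theorem exists_env (S : Set ℕ) (h : S.Finite) (ρ : ℕ → ℕ) : ∃ L, ∀ i ∈ S, env L i = ρ i := by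
  obtain ⟨N, hN⟩ := exists_bound S h
  refine ⟨(List.range N).map ρ, fun i hi => ?_⟩
  simp [env, hN i hi]

theorem Ent.congr {α : SProp σ} {φ : Fml σ} {ρ ρ' : ℕ → ℕ} (e : Ent α φ ρ)
    (h : ∀ i ∈ φ.free, ρ i = ρ' i) : Ent α φ ρ' := fun A v hv =>
  sat_congr A φ _ _ (fun i hi => by simp only [h i hi]) (e A v hv)

theorem Dec.congr {α : SProp σ} {φ : Fml σ} {ρ ρ' : ℕ → ℕ} (d : Dec α φ ρ)
    (h : ∀ i ∈ φ.free, ρ i = ρ' i) : Dec α φ ρ' where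
  dec := d.dec.imp (fun e => e.congr h) (fun e => e.congr h)
  wex vs θ he e := by
    classical
    obtain ⟨r, a, b⟩ := d.wex vs θ he (e.congr fun i hi => (h i hi).symm)
    refine ⟨fun i => if i ∈ vs then r i else ρ' i, fun i hi => by simp [hi], b.congr ?_⟩
    intro i hi
    by_cases hv : i ∈ vs
    · simp [hv]
    · simp only [hv, if_false]; rw [a i hv]
      exact h i (by subst he; exact ⟨hi, hv⟩)
  wall vs θ he e := by
    classical
    obtain ⟨r, a, b⟩ := d.wall vs θ he (e.congr fun i hi => (h i hi).symm)
    refine ⟨fun i => if i ∈ vs then r i else ρ' i, fun i hi => by simp [hi], b.congr ?_⟩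
    intro i hi
    by_cases hv : i ∈ vs
    · simp [hv]
    · simp only [hv, if_false]; rw [a i hv]
      exact h i (by subst he; exact ⟨hi, hv⟩)

def Th (α : ℕ → SProp σ) (φ : Fml σ) (ρ : ℕ → ℕ) : Prop := ∃ n, Ent (α n) φ ρ

structure Henkin (F : Set (Fml σ)) (α : ℕ → SProp σ) : Prop where
  mono : ∀ m n, m ≤ n → Le (α n) (α m)
  sat : ∀ n, ∃ A v, α n A v
  dec : ∀ φ ∈ F, ∀ ρ, ∃ n, Dec (α n) φ ρ

theorem chain {C : Set σ.Pred} {α β : SProp σ} (h : Good C α β) (F : Set (Fml σ))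
    (hF : F.Countable) (hne : F.Nonempty) : ∃ a b : ℕ → SProp σ, Le (a 0) α ∧ Le (b 0) β ∧
      (∀ n, Good C (a n) (b n)) ∧ Henkin F a ∧ Henkin F b := by
  classical
  have : Countable F := hF.to_subtype
  have : Nonempty F := hne.to_subtype
  obtain ⟨t, ht⟩ := exists_surjective_nat (F × List ℕ)
  choose nx n1 n2 n3 n4 using fun (s : St C) (n : ℕ) =>
    step_two s (t n).1.1 (env (t n).2) (env_bdd _)
  let s : ℕ → St C := fun n => Nat.rec ⟨(α, β), h⟩ (fun n s => nx s n) n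
  have hs : ∀ n, s (n+1) = nx (s n) n := fun n => rfl
  have m1 : ∀ m n, m ≤ n → Le (s n).1.1 (s m).1.1 := by
    intro m n hmn
    induction n, hmn using Nat.le_induction with
    | base => exact fun A v hv => hv
    | succ n _ ih => exact fun A v hv => ih A v (n1 (s n) n A v hv)
  have m2 : ∀ m n, m ≤ n → Le (s n).1.2 (s m).1.2 := by
    intro m n hmn
    induction n, hmn using Nat.le_induction with
    | base => exact fun A v hv => hv
    | succ n _ ih => exact fun A v hv => ih A v (n2 (s n) n A v hv)
  refine ⟨fun n => (s n).1.1, fun n => (s n).1.2, fun A v hv => hv, fun A v hv => hv,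
    fun n => (s n).2, ⟨m1, fun n => (s n).2.sat, ?_⟩, ⟨m2, fun n => (s n).2.symm.sat, ?_⟩⟩
  · intro φ hφ ρ
    obtain ⟨L, hL⟩ := exists_env φ.free (free_finite φ) ρ
    obtain ⟨n, hn⟩ := ht (⟨φ, hφ⟩, L)
    refine ⟨n + 1, Dec.congr (ρ := env L) ?_ hL⟩
    have := n3 (s n) n
    rw [hn] at this
    exact this
  · intro φ hφ ρ
    obtain ⟨L, hL⟩ := exists_env φ.free (free_finite φ) ρ
    obtain ⟨n, hn⟩ := ht (⟨φ, hφ⟩, L)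
    refine ⟨n + 1, Dec.congr (ρ := env L) ?_ hL⟩
    have := n4 (s n) n
    rw [hn] at this
    exact this

namespace Henkin

variable {F : Set (Fml σ)} {α : ℕ → SProp σ}

theorem neg_iff (H : Henkin F α) {φ : Fml σ} (hφ : φ ∈ F) (ρ : ℕ → ℕ) :
    Th α (.neg φ) ρ ↔ ¬ Th α φ ρ := by
  constructor
  · rintro ⟨n, hn⟩ ⟨m, hm⟩
    obtain ⟨A, v, hv⟩ := H.sat (max n m)
    exact hn A v (H.mono _ _ (le_max_left _ _) A v hv) (hm A v (H.mono _ _ (le_max_right _ _) A v hv))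
  · intro h
    obtain ⟨n, hn⟩ := H.dec φ hφ ρ
    rcases hn.dec with h' | h'
    · exact (h ⟨n, h'⟩).elim
    · exact ⟨n, h'⟩

/-- deduction from two premises -/
theorem ded (H : Henkin F α) {φ ψ χ : Fml σ} {ρ ρ' ρ'' : ℕ → ℕ} (h1 : Th α φ ρ) (h2 : Th α ψ ρ')
    (h : ∀ (A : Str σ) (v : ℕ → A.Dom), Sat A φ (fun i => v (ρ i)) →
      Sat A ψ (fun i => v (ρ' i)) → Sat A χ (fun i => v (ρ'' i))) : Th α χ ρ'' := by
  obtain ⟨n, hn⟩ := h1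
  obtain ⟨m, hm⟩ := h2
  exact ⟨max n m, fun A v hv => h A v (hn A v (H.mono _ _ (le_max_left _ _) A v hv))
    (hm A v (H.mono _ _ (le_max_right _ _) A v hv))⟩

theorem rel_congr (H : Henkin F α) (p : σ.Pred) (t t' : Fin (σ.ar p) → ℕ)
    (he : ∀ i, Th α (.eqv (t i) (t' i)) id) (h : Th α (.rel p t) id) : Th α (.rel p t') id := by
  choose n hn using he
  obtain ⟨m, hm⟩ := h
  refine ⟨max m (Finset.univ.sup n), fun A v hv => ?_⟩
  have h1 := hm A v (H.mono _ _ (le_max_left _ _) A v hv)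
  have h2 : ∀ i, v (t i) = v (t' i) := fun i => hn i A v
    (H.mono _ _ (le_trans (Finset.le_sup (f := n) (Finset.mem_univ i)) (le_max_right _ _)) A v hv)
  simp only [Sat, id] at h1 ⊢
  simpa only [h2] using h1

theorem truth (H : Henkin F α) (M : Str σ) (q : ℕ → M.Dom) (hq : Function.Surjective q)
    (heq : ∀ i j, q i = q j ↔ Th α (.eqv i j) id) (S : Set σ.Pred)
    (hrel : ∀ p ∈ S, ∀ t : Fin (σ.ar p) → ℕ, M.rel p (fun i => q (t i)) ↔ Th α (.rel p t) id)
    (φ : Fml σ) : subs φ ⊆ F → φ.sig ⊆ S → ∀ ρ : ℕ → ℕ,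
      (Sat M φ (fun i => q (ρ i)) ↔ Th α φ ρ) := by
  classical
  have lift : ∀ (vs : List ℕ) (ρ : ℕ → ℕ) (v' : ℕ → M.Dom), (∀ i, i ∉ vs → v' i = q (ρ i)) →
      ∃ ρ' : ℕ → ℕ, (∀ i, i ∉ vs → ρ' i = ρ i) ∧ v' = fun i => q (ρ' i) := by
    intro vs ρ v' hv
    choose o ho using hq
    refine ⟨fun i => if i ∈ vs then o (v' i) else ρ i, fun i hi => by simp [hi], ?_⟩
    funext i
    by_cases hi : i ∈ vs
    · simp [hi, ho]
    · simp [hi, hv]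
  induction φ with
  | rel p ts =>
    intro _ hS ρ
    exact hrel p (hS rfl) (fun i => ρ (ts i))
  | eqv i j =>
    intro _ _ ρ
    exact heq (ρ i) (ρ j)
  | fls =>
    intro _ _ ρ
    refine ⟨fun h => h.elim, ?_⟩
    rintro ⟨n, hn⟩
    obtain ⟨A, v, hv⟩ := H.sat n
    exact (hn A v hv).elim
  | neg φ ih =>
    intro hF hS ρ
    have hF' : subs φ ⊆ F := fun x hx => hF (Or.inr hx)
    rw [H.neg_iff (hF' (self_subs φ)), ← ih hF' hS ρ]
    rfl
  | conj φ ψ ih1 ih2 =>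
    intro hF hS ρ
    have hF1 : subs φ ⊆ F := fun x hx => hF (Or.inr (Or.inl hx))
    have hF2 : subs ψ ⊆ F := fun x hx => hF (Or.inr (Or.inr hx))
    simp only [Sat]
    rw [ih1 hF1 (fun x hx => hS (Or.inl hx)), ih2 hF2 (fun x hx => hS (Or.inr hx))]
    constructor
    · rintro ⟨h1, h2⟩
      exact H.ded h1 h2 (fun A v a b => ⟨a, b⟩)
    · intro h
      exact ⟨H.ded h h (fun A v a _ => a.1), H.ded h h (fun A v a _ => a.2)⟩
  | disj φ ψ ih1 ih2 =>
    intro hF hS ρ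
    have hF1 : subs φ ⊆ F := fun x hx => hF (Or.inr (Or.inl hx))
    have hF2 : subs ψ ⊆ F := fun x hx => hF (Or.inr (Or.inr hx))
    simp only [Sat]
    rw [ih1 hF1 (fun x hx => hS (Or.inl hx)), ih2 hF2 (fun x hx => hS (Or.inr hx))]
    constructor
    · rintro (h1 | h1)
      · exact H.ded h1 h1 (fun A v a _ => Or.inl a)
      · exact H.ded h1 h1 (fun A v a _ => Or.inr a)
    · intro h
      by_cases h1 : Th α φ ρ
      · exact Or.inl h1
      · rw [← H.neg_iff (hF1 (self_subs φ))] at h1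
        exact Or.inr (H.ded h h1 (fun A v a b => a.resolve_left b))
  | impl φ ψ ih1 ih2 =>
    intro hF hS ρ
    have hF1 : subs φ ⊆ F := fun x hx => hF (Or.inr (Or.inl hx))
    have hF2 : subs ψ ⊆ F := fun x hx => hF (Or.inr (Or.inr hx))
    simp only [Sat]
    rw [ih1 hF1 (fun x hx => hS (Or.inl hx)), ih2 hF2 (fun x hx => hS (Or.inr hx))]
    constructor
    · intro h
      by_cases h1 : Th α φ ρ
      · exact H.ded (h h1) h1 (fun A v a _ _ => a)
      · rw [← H.neg_iff (hF1 (self_subs φ))] at h1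
        exact H.ded h1 h1 (fun A v a _ b => (a b).elim)
    · intro h h1
      exact H.ded h h1 (fun A v a b => a b)
  | all vs φ ih =>
    intro hF hS ρ
    have hF' : subs φ ⊆ F := fun x hx => hF (Or.inr hx)
    have hm := hF (self_subs (.all vs φ))
    constructor
    · intro h
      by_contra hc
      rw [← H.neg_iff hm] at hc
      obtain ⟨n, hn⟩ := H.dec _ hm ρ
      rcases hn.dec with h' | h'
      · exact (H.neg_iff hm ρ).1 hc ⟨n, h'⟩
      · obtain ⟨ρ', a, b⟩ := hn.wall vs φ rfl h'
        refine (H.neg_iff (hF' (self_subs φ)) ρ').1 ⟨n, b⟩ ((ih hF' hS ρ').1 (h _ ?_))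
        intro i hi; simp only [a i hi]
    · intro h v' hv'
      obtain ⟨ρ', a, rfl⟩ := lift vs ρ v' hv'
      rw [ih hF' hS ρ']
      exact H.ded h h (fun A v hs _ => hs _ (fun i hi => by simp only [a i hi]))
  | ex vs φ ih =>
    intro hF hS ρ
    have hF' : subs φ ⊆ F := fun x hx => hF (Or.inr hx)
    have hm := hF (self_subs (.ex vs φ))
    constructor
    · rintro ⟨v', hv', hs⟩
      obtain ⟨ρ', a, rfl⟩ := lift vs ρ v' hv'
      rw [ih hF' hS ρ'] at hs
      exact H.ded hs hs (fun A v hs _ => ⟨_, fun i hi => by simp only [a i hi], hs⟩)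
    · intro h
      obtain ⟨n, hn⟩ := H.dec _ hm ρ
      rcases hn.dec with h' | h'
      · obtain ⟨ρ', a, b⟩ := hn.wex vs φ rfl h'
        exact ⟨fun i => q (ρ' i), fun i hi => by simp only [a i hi], (ih hF' hS ρ').2 ⟨n, b⟩⟩
      · exact ((H.neg_iff hm ρ).1 ⟨n, h'⟩ h).elim

end Henkin

theorem craig_aux (φ ψ : Fml σ) (hφ : φ.IsSentence) (hψ : ψ.IsSentence)
    (h : Good (φ.sig ∩ ψ.sig) (fun A v => Sat A φ v) (fun A v => ¬ Sat A ψ v)) :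
    ¬ Entails φ ψ := by
  classical
  let F : Set (Fml σ) := subs φ ∪ subs ψ ∪
    ((⋃ p ∈ φ.sig ∪ ψ.sig, Set.range (fun t => Fml.rel p t)) ∪
      Set.range (fun x : ℕ × ℕ => Fml.eqv x.1 x.2))
  have hFc : F.Countable := by
    refine (((subs_finite φ).union (subs_finite ψ)).countable).union
      (Set.Countable.union ?_ (Set.countable_range _))
    exact ((sig_finite φ).union (sig_finite ψ)).countable.biUnion
      (fun p _ => Set.countable_range _)
  have hF1 : subs φ ⊆ F := fun x hx => Or.inl (Or.inl hx)
  have hF2 : subs ψ ⊆ F := fun x hx => Or.inl (Or.inr hx)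
  have hFe : ∀ i j, Fml.eqv i j ∈ F := fun i j => Or.inr (Or.inr ⟨(i, j), rfl⟩)
  have hFr : ∀ p ∈ φ.sig ∪ ψ.sig, ∀ t, Fml.rel p t ∈ F := fun p hp t =>
    Or.inr (Or.inl (Set.mem_biUnion hp ⟨t, rfl⟩))
  obtain ⟨a, b, la, lb, hg, Ha, Hb⟩ := chain h F hFc ⟨φ, hF1 (self_subs φ)⟩
  have agree : ∀ χ ∈ F, χ.sig ⊆ φ.sig ∩ ψ.sig → (Th a χ id ↔ Th b χ id) := by
    intro χ hχ hs
    constructor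
    · intro h1
      by_contra h2
      rw [← Hb.neg_iff hχ] at h2
      obtain ⟨n, hn⟩ := h1
      obtain ⟨m, hm⟩ := h2
      exact (hg (max n m)).insep χ hs (hn.mono (Ha.mono _ _ (le_max_left _ _)))
        (hm.mono (Hb.mono _ _ (le_max_right _ _)))
    · intro h1
      by_contra h2
      rw [← Ha.neg_iff hχ] at h2
      obtain ⟨n, hn⟩ := h1
      obtain ⟨m, hm⟩ := h2
      exact (hg (max n m)).symm.insep χ hs (hn.mono (Hb.mono _ _ (le_max_left _ _)))
        (hm.mono (Ha.mono _ _ (le_max_right _ _)))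
  let r : Setoid ℕ :=
    { r := fun i j => Th a (.eqv i j) id
      iseqv :=
        { refl := fun i => ⟨0, fun A v _ => rfl⟩
          symm := fun h => Ha.ded h h (fun A v x _ => Eq.symm x)
          trans := fun h h' => Ha.ded h h' (fun A v x y => Eq.trans x y) } }
  let q : ℕ → Quotient r := fun i => Quotient.mk r i
  have hq : Function.Surjective q := Quotient.mk_surjective
  have heqa : ∀ i j, q i = q j ↔ Th a (.eqv i j) id := fun i j => Quotient.eq (r := r)
  have heqb : ∀ i j, q i = q j ↔ Th b (.eqv i j) id := fun i j =>
    (heqa i j).trans (agree _ (hFe i j) (by simp [Fml.sig]))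
  let M : Str σ :=
    { Dom := Quotient r
      nonempty := ⟨q 0⟩
      rel := fun p x => if p ∈ φ.sig then Th a (.rel p (fun i => (x i).out)) id
        else Th b (.rel p (fun i => (x i).out)) id }
  have hout : ∀ i, q (Quotient.out (q i)) = q i := fun i => Quotient.out_eq _
  have hra : ∀ p ∈ φ.sig, ∀ t : Fin (σ.ar p) → ℕ,
      M.rel p (fun i => q (t i)) ↔ Th a (.rel p t) id := by
    intro p hp t
    have : M.rel p (fun i => q (t i)) = Th a (.rel p (fun i => (q (t i)).out)) id := if_pos hp
    rw [this]
    exact ⟨Ha.rel_congr p _ _ (fun i => (heqa _ _).1 (hout _)),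
      Ha.rel_congr p _ _ (fun i => (heqa _ _).1 (hout _).symm)⟩
  have hrb : ∀ p ∈ ψ.sig, ∀ t : Fin (σ.ar p) → ℕ,
      M.rel p (fun i => q (t i)) ↔ Th b (.rel p t) id := by
    intro p hp t
    by_cases hp' : p ∈ φ.sig
    · rw [hra p hp' t]
      refine agree _ (hFr p (Or.inl hp') t) ?_
      intro x hx
      cases hx
      exact ⟨hp', hp⟩
    · have : M.rel p (fun i => q (t i)) = Th b (.rel p (fun i => (q (t i)).out)) id := if_neg hp'
      rw [this]
      exact ⟨Hb.rel_congr p _ _ (fun i => (heqb _ _).1 (hout _)),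
        Hb.rel_congr p _ _ (fun i => (heqb _ _).1 (hout _).symm)⟩
  have t1 := (Ha.truth M q hq heqa φ.sig hra φ hF1 subset_rfl id).2 ⟨0, fun A v hv => la A v hv⟩
  have t2 : ¬ Sat M ψ q := by
    intro hs
    have h1 := (Hb.truth M q hq heqb ψ.sig hrb ψ hF2 subset_rfl id).1 hs
    exact (Hb.neg_iff (hF2 (self_subs ψ)) id).1 ⟨0, fun A v hv => lb A v hv⟩ h1
  intro hE
  refine t2 (hE M (fun v => sat_congr M φ _ v ?_ t1) q)
  intro i hi
  rw [show φ.free = ∅ from hφ] at hi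
  exact hi.elim

/-- In first-order logic, FO(Σ)-entailment implies strong
FO(Σ)-entailment (a consequence of the Craig interpolation theorem). -/
theorem fo_entailment_implies_strong_fo_entailment
    {σ : Sig} (Sg : Set σ.Pred) (hSg : Sg.Finite) (φ₁ φ₂ : Fml σ)
    (h1 : φ₁.IsSentence) (h2 : φ₂.IsSentence)
    (hent : ∀ ψ : Fml σ, ψ.IsSentence → ψ.sig ⊆ Sg →
        Entails φ₂ ψ → Entails φ₁ ψ) :
    ∀ ψ : Fml σ, ψ.IsSentence → ψ.sig ∩ φ₂.sig ⊆ Sg →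
        Entails φ₂ ψ → Entails φ₁ ψ := by
  intro ψ hψ hsig hE
  have hsupp : ∀ θ : Fml σ, Supp (fun A v => Sat A θ v) := by
    intro θ
    obtain ⟨N, hN⟩ := exists_bound _ (free_finite θ)
    exact ⟨N, fun A v v' h => sat_congr A θ v v' (fun i hi => h i (hN i hi))⟩
  have hsep : ∃ χ : Fml σ, χ.sig ⊆ φ₂.sig ∩ ψ.sig ∧ Ent (fun A v => Sat A φ₂ v) χ id ∧
      Ent (fun A v => ¬ Sat A ψ v) (.neg χ) id := by
    by_contra hc
    exact craig_aux φ₂ ψ h2 hψ ⟨hsupp φ₂, hsupp (.neg ψ), fun χ a b c => hc ⟨χ, a, b, c⟩⟩ hE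
  obtain ⟨χ, hC, e1, e2⟩ := hsep
  have hfin := free_finite χ
  have := hent (.all hfin.toFinset.toList χ) (by simp [Fml.IsSentence, Fml.free])
    (fun x hx => hsig ⟨(hC hx).2, (hC hx).1⟩)
    (fun A hA v v' _ => e1 A v' (hA v'))
  intro A hA v
  by_contra hn
  exact e2 A v hn (this A hA v v (fun _ _ => rfl))

end FOG
end

section
/- Let 𝒜 = (Q,Θ,q₀,δ,Ω) be a two-way alternating tree automaton (2ATA). If L(𝒜) ≠ ∅, then there is a Θ-labeled tree (T,L) ∈ L(𝒜) such that the outdegree of T is bounded by |Q|, the number of states of 𝒜. -/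
/-! Core: two-way alternating parity tree automata (2ATAs) on finitely
branching labeled trees. -/

namespace TA

/-- nodes: words over `ℕ ∖ {0}`; the successors of `w` are the `w ++ [i]` -/
abbrev Node : Type := List ℕ+

/-- a tree: a nonempty, prefix-closed, finitely branching set of nodes -/
def IsTree (T : Set Node) : Prop :=
  T.Nonempty ∧ (∀ w ∈ T, ∀ v : Node, v <+: w → v ∈ T) ∧
    ∀ w ∈ T, {i : ℕ+ | w ++ [i] ∈ T}.Finite

/-- positive Boolean formulas over `α` -/
inductive PosBool (α : Type) : Type
  | tt
  | ff
  | var (a : α)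
  | and (f g : PosBool α)
  | or (f g : PosBool α)

def PosBool.eval {α : Type} (v : α → Prop) : PosBool α → Prop
  | .tt => True
  | .ff => False
  | .var a => v a
  | .and f g => f.eval v ∧ g.eval v
  | .or f g => f.eval v ∨ g.eval v

/-- the transitions of a 2ATA: `q` (stay), `⟨−⟩q` (predecessor, required to
exist), `[−]q` (predecessor, if it exists), `◇q` (some successor),
`□q` (every successor) -/
inductive Move (Q : Type) : Type
  | here (q : Q)
  | up (q : Q)
  | upOpt (q : Q)
  | dia (q : Q)
  | box (q : Q)

/-- a two-way alternating tree automaton (2ATA); the state set `Q` is assumed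
finite where relevant -/
structure ATA (Q Θ : Type) where
  init : Q
  δ : Q → Θ → PosBool (Move Q)
  prio : Q → ℕ

/-- a run of the 2ATA `A` on the `Θ`-labeled tree `(T, Lab)`: a
`(T × Q)`-labeled tree `(Tr, r)` -/
structure IsRun {Q Θ : Type} (A : ATA Q Θ) (T : Set Node) (Lab : Node → Θ)
    (Tr : Set Node) (r : Node → Node × Q) : Prop where
  tree : IsTree Tr
  root : r [] = ([], A.init)
  inT : ∀ y ∈ Tr, (r y).1 ∈ T
  step : ∀ y ∈ Tr, ∃ v : Move Q → Prop,
    (A.δ (r y).2 (Lab (r y).1)).eval v ∧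
    (∀ p, v (.here p) →
      ∃ i : ℕ+, y ++ [i] ∈ Tr ∧ r (y ++ [i]) = ((r y).1, p)) ∧
    (∀ p, v (.up p) → (r y).1 ≠ [] ∧
      ∃ i : ℕ+, y ++ [i] ∈ Tr ∧ r (y ++ [i]) = ((r y).1.dropLast, p)) ∧
    (∀ p, v (.upOpt p) → (r y).1 = [] ∨
      ∃ i : ℕ+, y ++ [i] ∈ Tr ∧ r (y ++ [i]) = ((r y).1.dropLast, p)) ∧
    (∀ p, v (.dia p) → ∃ j : ℕ+, (r y).1 ++ [j] ∈ T ∧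
      ∃ i : ℕ+, y ++ [i] ∈ Tr ∧ r (y ++ [i]) = ((r y).1 ++ [j], p)) ∧
    (∀ p, v (.box p) → ∀ j : ℕ+, (r y).1 ++ [j] ∈ T →
      ∃ i : ℕ+, y ++ [i] ∈ Tr ∧ r (y ++ [i]) = ((r y).1 ++ [j], p))

/-- an infinite path through the run tree, starting at its root -/
def IsRunPath (Tr : Set Node) (π : ℕ → Node) : Prop :=
  π 0 = [] ∧ ∀ n, π (n + 1) ∈ Tr ∧ ∃ i : ℕ+, π (n + 1) = π n ++ [i]

/-- the parity condition: the largest priority occurring infinitely often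
along the sequence of states is even -/
def ParityAcc {Q : Type} (prio : Q → ℕ) (qs : ℕ → Q) : Prop :=
  ∃ m : ℕ, Even m ∧ {j | prio (qs j) = m}.Infinite ∧
    ∀ m', m < m' → {j | prio (qs j) = m'}.Finite

/-- the 2ATA `A` accepts the `Θ`-labeled tree `(T, Lab)` -/
def Accepts {Q Θ : Type} (A : ATA Q Θ) (T : Set Node) (Lab : Node → Θ) : Prop :=
  ∃ (Tr : Set Node) (r : Node → Node × Q), IsRun A T Lab Tr r ∧
    ∀ π : ℕ → Node, IsRunPath Tr π → ParityAcc A.prio (fun n => (r (π n)).2)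

/-- `(T, Lab) ∈ L(A)` -/
def InLang {Q Θ : Type} (A : ATA Q Θ) (T : Set Node) (Lab : Node → Θ) : Prop :=
  IsTree T ∧ Accepts A T Lab

/-- `w·i` for `i ∈ ℤ` : `w·0 = w`, `w·(−1)` is the predecessor of `w`
(undefined at the root), `w·i = w ++ [i]` for `i ≥ 1` -/
def moveZ (x : Node) (i : ℤ) : Option Node :=
  if i = 0 then some x
  else if i = -1 then (if x = [] then none else some x.dropLast)
  else if h : 0 < i then some (x ++ [⟨i.toNat, by omega⟩]) else none

end TA

namespace TA

theorem parity_contra {c : ℕ → ℕ} (h : ParityAcc id c) {k : ℕ} (hk : Odd k) (n0 : ℕ)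
    (hle : ∀ n, n0 ≤ n → c n ≤ k) (hinf : ∀ n, ∃ m, n ≤ m ∧ c m = k) : False := by
  obtain ⟨m, hm, hmi, hmf⟩ := h
  have hki : {j | id (c j) = k}.Infinite := by
    rw [Set.infinite_iff_exists_gt]
    intro a
    obtain ⟨b, hb, hb'⟩ := hinf (a + 1)
    exact ⟨b, hb', hb⟩
  rcases lt_trichotomy m k with h1 | h1 | h1
  · exact hki (hmf k h1)
  · subst h1
    exact (Nat.not_even_iff_odd.2 hk) hm
  · rw [Set.infinite_iff_exists_gt] at hmi
    obtain ⟨b, hb, hb'⟩ := hmi n0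
    have := hle b hb'.le
    simp only [Set.mem_ofPred_eq, id] at hb
    omega

/-- `z` lies strictly below `y`, with maximal priority `k` on the way. -/
def Rel (Tr : Set Node) (c : Node → ℕ) (k : ℕ) (z y : Node) : Prop :=
  z ∈ Tr ∧ y <+: z ∧ (∀ j, y.length ≤ j → j < z.length → c (z.take j) ≤ k) ∧
    ∃ j, y.length ≤ j ∧ j < z.length ∧ c (z.take j) = k

theorem rel_wf (Tr : Set Node) (hpc : ∀ w ∈ Tr, ∀ v : Node, v <+: w → v ∈ Tr) (c : Node → ℕ)
    (hacc : ∀ π, IsRunPath Tr π → ParityAcc id (fun n => c (π n))) (k : ℕ) (hk : Odd k) :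
    WellFounded (Rel Tr c k) := by
  rw [wellFounded_iff_isEmpty_descending_chain]
  refine ⟨?_⟩
  rintro ⟨f, hf⟩
  have hpre : ∀ n m, n ≤ m → f n <+: f m := by
    intro n m h
    induction m, h using Nat.le_induction with
    | base => exact List.prefix_rfl
    | succ m _ ih => exact ih.trans (hf m).2.1
  have hlt : ∀ n, (f n).length < (f (n+1)).length := by
    intro n
    obtain ⟨j, h1, h2, -⟩ := (hf n).2.2.2
    omega
  have hlen : ∀ n, n ≤ (f n).length := by
    intro n
    induction n with
    | zero => simp
    | succ n ih => have := hlt n; omega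
  have htake : ∀ n m j, j ≤ (f n).length → j ≤ (f m).length → (f n).take j = (f m).take j := by
    have key : ∀ n m j, n ≤ m → j ≤ (f n).length → (f n).take j = (f m).take j := by
      intro n m j h hj
      obtain ⟨t, ht⟩ := hpre n m h
      rw [← ht, List.take_append_of_le_length hj]
    intro n m j h1 h2
    rcases le_total n m with h | h
    · exact key n m j h h1
    · exact (key m n j h h2).symm
  set π : ℕ → Node := fun n => (f n).take n with hπ
  have hπt : ∀ n m, n ≤ (f m).length → π n = (f m).take n := fun n m h => htake n m n (hlen n) h
  have hpath : IsRunPath Tr π := by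
    refine ⟨by simp [hπ], fun n => ⟨?_, ?_⟩⟩
    · exact hpc _ (hf n).1 _ (List.take_prefix _ _)
    · have h1 : n < (f (n+1)).length := by have := hlen (n+1); omega
      refine ⟨(f (n+1))[n], ?_⟩
      rw [hπt n (n+1) h1.le, hπt (n+1) (n+1) h1]
      exact (List.take_concat_get' _ _ h1).symm
  -- locating indices
  have hloc : ∀ j, (f 0).length ≤ j → ∃ n, (f n).length ≤ j ∧ j < (f (n+1)).length := by
    intro j hj
    by_contra! hcon
    have : ∀ n, (f n).length ≤ j := by
      intro n
      induction n with
      | zero => exact hj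
      | succ n ih => exact hcon n ih
    have := this (j+1)
    have := hlen (j+1)
    omega
  refine parity_contra (hacc π hpath) hk (f 0).length ?_ ?_
  · intro j hj
    obtain ⟨n, h1, h2⟩ := hloc j hj
    have := (hf n).2.2.1 j h1 h2
    rwa [← hπt j (n+1) h2.le] at this
  · intro n
    obtain ⟨j, h1, h2, h3⟩ := (hf n).2.2.2
    refine ⟨j, (hlen n).trans h1, ?_⟩
    rwa [← hπt j (n+1) h2.le] at h3

theorem exists_rank (Tr : Set Node) (hpc : ∀ w ∈ Tr, ∀ v : Node, v <+: w → v ∈ Tr) (c : Node → ℕ)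
    (hacc : ∀ π, IsRunPath Tr π → ParityAcc id (fun n => c (π n))) :
    ∃ ρ : ℕ → Node → Ordinal.{0}, ∀ y i, y ++ [i] ∈ Tr → ∀ k, c y ≤ k →
      ρ k (y ++ [i]) ≤ ρ k y ∧ (Odd k → c y = k → ρ k (y ++ [i]) < ρ k y) := by
  classical
  refine ⟨fun k y => if h : IsWellFounded Node (Rel Tr c k) then
    IsWellFounded.rank (hwf := h) (Rel Tr c k) y else 0, ?_⟩
  intro y i hy k hk
  by_cases h : IsWellFounded Node (Rel Tr c k)
  · simp only [h, dite_true]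
    constructor
    · rw [IsWellFounded.rank_eq]
      refine Ordinal.iSup_le ?_
      rintro ⟨z, hz⟩
      refine Order.succ_le_of_lt (IsWellFounded.rank_lt_of_rel ?_)
      obtain ⟨h1, h2, h3, j, h4, h5, h6⟩ := hz
      refine ⟨h1, (List.prefix_append _ _).trans h2, ?_, j, ?_, h5, h6⟩
      · intro j hj hj'
        rcases Nat.eq_or_lt_of_le hj with h | h
        · obtain ⟨t, rfl⟩ := h2
          subst h
          simpa using hk
        · exact h3 j (by simpa using h) hj'
      · simp at h4; omega
    · intro _ hc
      refine IsWellFounded.rank_lt_of_rel ⟨hy, List.prefix_append _ _, ?_, y.length, le_rfl, by simp, by simpa using hc⟩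
      intro j h1 h2
      have : j = y.length := by simp at h2; omega
      subst this
      simpa using hk
  · simp only [h, dite_false]
    refine ⟨le_rfl, fun ho _ => absurd ⟨rel_wf Tr hpc c hacc k ho⟩ h⟩

/-- signatures -/
abbrev Sig (N : ℕ) := Lex (Fin (N + 1) → Ordinal.{0})

/-- truncation to priorities at least `k` -/
noncomputable def trunc (N k : ℕ) (s : Sig N) : Sig N :=
  toLex fun i => if k ≤ N - i.1 then ofLex s i else 0

theorem trunc_mono (N k : ℕ) : Monotone (trunc N k) := by
  intro s t h
  rcases h.eq_or_lt with rfl | h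
  · exact le_rfl
  · obtain ⟨i, h1, h2⟩ := h
    by_cases hi : k ≤ N - i.1
    · refine le_of_lt ⟨i, ?_, ?_⟩
      · intro j hj
        have := h1 j hj
        simp only [trunc, Pi.toLex_apply, Pi.ofLex_apply]
        simp_all
      · simpa [trunc, hi] using h2
    · refine le_of_eq ?_
      unfold trunc
      congr 1
      funext j
      split_ifs with hj
      · refine h1 j ?_
        change j.1 < i.1
        omega
      · rfl

theorem trunc_trunc (N : ℕ) {k m : ℕ} (h : k ≤ m) (s : Sig N) :
    trunc N m (trunc N k s) = trunc N m s := by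
  unfold trunc
  congr 1
  funext j
  split_ifs with hj
  · simp [h.trans hj]
  · rfl

theorem exists_sig (N : ℕ) (Tr : Set Node) (hpc : ∀ w ∈ Tr, ∀ v : Node, v <+: w → v ∈ Tr)
    (c : Node → ℕ) (hN : ∀ y, c y ≤ N)
    (hacc : ∀ π, IsRunPath Tr π → ParityAcc id (fun n => c (π n))) :
    ∃ S : Node → Sig N, ∀ y i, y ++ [i] ∈ Tr →
      trunc N (c y) (S (y ++ [i])) ≤ trunc N (c y) (S y) ∧
      (Odd (c y) → trunc N (c y) (S (y ++ [i])) < trunc N (c y) (S y)) := by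
  obtain ⟨ρ, hρ⟩ := exists_rank Tr hpc c hacc
  refine ⟨fun y => toLex fun i => ρ (N - i.1) y, fun y i hy => ?_⟩
  have hle : (fun j : Fin (N+1) => if c y ≤ N - j.1 then ρ (N - j.1) (y ++ [i]) else 0) ≤
      (fun j : Fin (N+1) => if c y ≤ N - j.1 then ρ (N - j.1) y else 0) := by
    intro j
    dsimp only
    split_ifs with hj
    · exact (hρ y i hy _ hj).1
    · exact le_rfl
  refine ⟨Pi.toLex_monotone hle, fun ho => Pi.toLex_strictMono ?_⟩
  refine lt_of_le_of_ne hle fun he => ?_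
  have h1 := congrFun he ⟨N - c y, by omega⟩
  have h2 : N - (N - c y) = c y := by have := hN y; omega
  simp only [h2, le_refl, if_true] at h1
  change ρ (N - (N - c y)) (y ++ [i]) = ρ (N - (N - c y)) y at h1
  rw [h2] at h1
  exact ((hρ y i hy _ le_rfl).2 ho rfl).ne h1

theorem parity_of_sig (N : ℕ) (c : ℕ → ℕ) (hN : ∀ n, c n ≤ N) (s : ℕ → Sig N)
    (h1 : ∀ n, trunc N (c n) (s (n+1)) ≤ trunc N (c n) (s n))
    (h2 : ∀ n, Odd (c n) → trunc N (c n) (s (n+1)) < trunc N (c n) (s n)) :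
    ∃ m : ℕ, Even m ∧ {j | c j = m}.Infinite ∧ ∀ m', m < m' → {j | c j = m'}.Finite := by
  classical
  have hex : ∃ m, m ≤ N ∧ {j | c j = m}.Infinite := by
    by_contra! hcon
    have : (⋃ m ∈ Set.Iic N, {j | c j = m}).Finite :=
      (Set.finite_Iic N).biUnion fun m hm => by simpa using hcon m hm
    refine Set.infinite_univ (this.subset fun j _ => ?_)
    simpa using hN j
  obtain ⟨m0, hm0N, hm0⟩ := hex
  set m := Nat.findGreatest (fun m => {j | c j = m}.Infinite) N with hm
  have hmi : {j | c j = m}.Infinite :=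
    Nat.findGreatest_spec (P := fun m => {j | c j = m}.Infinite) hm0N hm0
  have hmf : ∀ m', m < m' → {j | c j = m'}.Finite := by
    intro m' h
    by_cases hle : m' ≤ N
    · simpa using Nat.findGreatest_is_greatest h hle
    · refine Set.Finite.subset Set.finite_empty fun j hj => ?_
      have := hN j
      simp only [Set.mem_ofPred_eq] at hj
      omega
  refine ⟨m, ?_, hmi, hmf⟩
  by_contra hodd
  rw [Nat.not_even_iff_odd] at hodd
  have hfin : {j | m < c j}.Finite := by
    have : (⋃ m' ∈ Set.Ioc m N, {j | c j = m'}).Finite :=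
      (Set.finite_Ioc m N).biUnion fun m' hm' => hmf m' hm'.1
    refine this.subset fun j hj => ?_
    simpa using ⟨hj, hN j⟩
  obtain ⟨n0, hn0⟩ := hfin.bddAbove
  have hn0' : ∀ n, n0 < n → c n ≤ m := by
    intro n hn
    by_contra! hc
    have := hn0 hc
    omega
  have hdec : ∀ n, n0 < n → trunc N m (s (n+1)) ≤ trunc N m (s n) := by
    intro n hn
    have := trunc_mono N m (h1 n)
    rwa [trunc_trunc N (hn0' n hn), trunc_trunc N (hn0' n hn)] at this
  have hanti : Antitone fun n => trunc N m (s (n0 + 1 + n)) :=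
    antitone_nat_of_succ_le fun n => hdec (n0 + 1 + n) (by omega)
  obtain ⟨a, ⟨b, rfl⟩, hb⟩ := (wellFounded_lt (α := Sig N)).has_min
    (Set.range fun n => trunc N m (s (n0 + 1 + n))) ⟨_, 0, rfl⟩
  rw [Set.infinite_iff_exists_gt] at hmi
  obtain ⟨j, hj, hj'⟩ := hmi (n0 + 1 + b)
  simp only [Set.mem_ofPred_eq] at hj
  have h3 := h2 j (hj ▸ hodd)
  rw [hj] at h3
  obtain ⟨d, rfl⟩ : ∃ d, j = n0 + 1 + d := ⟨j - (n0+1), by omega⟩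
  refine hb _ ⟨d + 1, rfl⟩ (lt_of_lt_of_le h3 (hanti (by omega)))

theorem concat_prefix_concat {α : Type} {u y : List α} {i j : α} (h : u ++ [i] <+: y ++ [j]) :
    (u = y ∧ i = j) ∨ u ++ [i] <+: y := by
  rw [List.prefix_concat_iff] at h
  rcases h with h | h
  · left
    simpa using h
  · exact Or.inr h

/-- Lemma on bounded outdegree: if `L(𝒜) ≠ ∅` then `𝒜`
accepts a tree whose outdegree is bounded by the number of states of `𝒜`. -/
theorem nonempty_lang_implies_bounded_outdegree
    {Q Θ : Type} [Fintype Q] (A : ATA Q Θ)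
    (h : ∃ (T : Set Node) (Lab : Node → Θ), InLang A T Lab) :
    ∃ (T : Set Node) (Lab : Node → Θ), InLang A T Lab ∧
      ∀ w ∈ T, {i : ℕ+ | w ++ [i] ∈ T}.ncard ≤ Fintype.card Q := by
  classical
  obtain ⟨T, Lab, hT, Tr, r, hrun, hacc⟩ := h
  have hTr := hrun.tree
  set N := Finset.univ.sup A.prio with hNdef
  have hN : ∀ q, A.prio q ≤ N := fun q => Finset.le_sup (Finset.mem_univ q)
  obtain ⟨S, hS⟩ := exists_sig N Tr hTr.2.1 (fun y => A.prio (r y).2) (fun y => hN _) hacc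
  have hnilTr : [] ∈ Tr := by
    obtain ⟨w, hw⟩ := hTr.1
    exact hTr.2.1 w hw _ List.nil_prefix
  have hnilT : [] ∈ T := by
    obtain ⟨w, hw⟩ := hT.1
    exact hT.2.1 w hw _ List.nil_prefix
  set Vis : Node × Q → Prop := fun p => ∃ y ∈ Tr, r y = p with hVis
  have hVisT : ∀ p, Vis p → p.1 ∈ T := by
    rintro p ⟨y, hy, rfl⟩
    exact hrun.inT y hy
  have hM : ∀ p, ∃ M : Sig N, Vis p → (∃ y ∈ Tr, r y = p ∧ S y = M) ∧
      ∀ y ∈ Tr, r y = p → M ≤ S y := by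
    intro p
    by_cases hp : Vis p
    · obtain ⟨y, ⟨hy, hy'⟩, hmin⟩ := (InvImage.wf S (wellFounded_lt (α := Sig N))).has_min
        {y | y ∈ Tr ∧ r y = p} hp
      exact ⟨S y, fun _ => ⟨⟨y, hy, hy', rfl⟩, fun z hz hz' => not_lt.1 (hmin z ⟨hz, hz'⟩)⟩⟩
    · exact ⟨S [], fun h => absurd h hp⟩
  choose M hM using hM
  have hσ : ∀ (x : Node) (p : Q), ∃ k : ℕ+, ∀ j : ℕ+, Vis (x ++ [j], p) →
      Vis (x ++ [k], p) ∧ M (x ++ [k], p) ≤ M (x ++ [j], p) := by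
    intro x p
    by_cases hp : ∃ j : ℕ+, Vis (x ++ [j], p)
    · obtain ⟨k, hk, hmin⟩ := (InvImage.wf (fun j : ℕ+ => M (x ++ [j], p))
        (wellFounded_lt (α := Sig N))).has_min {j : ℕ+ | Vis (x ++ [j], p)} hp
      exact ⟨k, fun j hj => ⟨hk, not_lt.1 (hmin j hj)⟩⟩
    · exact ⟨1, fun j hj => absurd ⟨j, hj⟩ hp⟩
  choose σ hσ using hσ
  set Good : Node × Q → Node × Q → Prop := fun p t => Vis t ∧
    trunc N (A.prio p.2) (M t) ≤ trunc N (A.prio p.2) (M p) ∧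
    (Odd (A.prio p.2) → trunc N (A.prio p.2) (M t) < trunc N (A.prio p.2) (M p)) with hGood
  have hgood : ∀ (p t : Node × Q) (y : Node) (i : ℕ+), r y = p → S y = M p →
      y ++ [i] ∈ Tr → r (y ++ [i]) = t → Good p t := by
    intro p t y i h1 h2 h3 h4
    have hv : Vis t := ⟨_, h3, h4⟩
    have hle := trunc_mono N (A.prio p.2) ((hM t hv).2 _ h3 h4)
    have hs := hS y i h3
    simp only [h1, h2] at hs
    exact ⟨hv, hle.trans hs.1, fun ho => hle.trans_lt (hs.2 ho)⟩
  have hgσ : ∀ (p : Node × Q) (x : Node) (j : ℕ+) (q : Q), Good p (x ++ [j], q) →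
      Good p (x ++ [σ x q], q) := by
    rintro p x j q ⟨h1, h2, h3⟩
    obtain ⟨h4, h5⟩ := hσ x q j h1
    have hle := trunc_mono N (A.prio p.2) h5
    exact ⟨h4, hle.trans h2, fun ho => hle.trans_lt (h3 ho)⟩
  -- the new tree
  set T' : Set Node := {w | w ∈ T ∧ ∀ (u : Node) (i : ℕ+), u ++ [i] <+: w → ∃ p, i = σ u p}
    with hT'def
  have hsub : ∀ w, {i : ℕ+ | w ++ [i] ∈ T'} ⊆ Set.range (σ w) := by
    intro w i hi
    obtain ⟨p, hp⟩ := hi.2 w i List.prefix_rfl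
    exact ⟨p, hp.symm⟩
  have hnilT' : [] ∈ T' := ⟨hnilT, fun u i h => by simp at h⟩
  have hT'pc : ∀ w ∈ T', ∀ v : Node, v <+: w → v ∈ T' := fun w hw v hv =>
    ⟨hT.2.1 w hw.1 v hv, fun u i h => hw.2 u i (h.trans hv)⟩
  have hT' : IsTree T' :=
    ⟨⟨[], hnilT'⟩, hT'pc, fun w _ => (Set.finite_range (σ w)).subset (hsub w)⟩
  have hT'ext : ∀ x ∈ T', ∀ p, x ++ [σ x p] ∈ T → x ++ [σ x p] ∈ T' := by
    intro x hx p hp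
    refine ⟨hp, fun u i h => ?_⟩
    rcases concat_prefix_concat h with ⟨rfl, rfl⟩ | h
    · exact ⟨p, rfl⟩
    · exact hx.2 u i h
  -- the edges of the new run
  set E : Node × Q → Node × Q → Prop := fun p t => Good p t ∧ t.1 ∈ T' ∧
    (t.1 = p.1 ∨ t.1 = p.1.dropLast ∨ ∃ q, t.1 = p.1 ++ [σ p.1 q]) with hE
  have hEfin : ∀ p, {t | E p t}.Finite := by
    intro p
    have : ((({p.1, p.1.dropLast} : Set Node) ∪ Set.range fun q => p.1 ++ [σ p.1 q]) ×ˢ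
        (Set.univ : Set Q)).Finite :=
      Set.Finite.prod ((Set.toFinite _).union (Set.finite_range _)) Set.finite_univ
    refine this.subset ?_
    rintro ⟨x, q⟩ ⟨-, -, h⟩
    refine ⟨?_, trivial⟩
    rcases h with h | h | ⟨q', h⟩
    · exact Or.inl (Or.inl h)
    · exact Or.inl (Or.inr h)
    · exact Or.inr ⟨q', h.symm⟩
  have hstep : ∀ p : Node × Q, Vis p → p.1 ∈ T' → ∃ v : Move Q → Prop,
      (A.δ p.2 (Lab p.1)).eval v ∧
      (∀ q, v (.here q) → E p (p.1, q)) ∧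
      (∀ q, v (.up q) → p.1 ≠ [] ∧ E p (p.1.dropLast, q)) ∧
      (∀ q, v (.upOpt q) → p.1 = [] ∨ E p (p.1.dropLast, q)) ∧
      (∀ q, v (.dia q) → ∃ j : ℕ+, p.1 ++ [j] ∈ T' ∧ E p (p.1 ++ [j], q)) ∧
      (∀ q, v (.box q) → ∀ j : ℕ+, p.1 ++ [j] ∈ T' → E p (p.1 ++ [j], q)) := by
    intro p hp hpT
    obtain ⟨y, hy, hry, hSy⟩ := (hM p hp).1
    obtain ⟨v, h0, h1, h2, h3, h4, h5⟩ := hrun.step y hy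
    rw [hry] at h0 h1 h2 h3 h4 h5
    have hdl : p.1.dropLast ∈ T' := hT'pc _ hpT _ (List.dropLast_prefix _)
    refine ⟨v, h0, ?_, ?_, ?_, ?_, ?_⟩
    · intro q hq
      obtain ⟨i, hi, hi'⟩ := h1 q hq
      exact ⟨hgood _ _ y i hry hSy hi hi', hpT, Or.inl rfl⟩
    · intro q hq
      obtain ⟨hne, i, hi, hi'⟩ := h2 q hq
      exact ⟨hne, hgood _ _ y i hry hSy hi hi', hdl, Or.inr (Or.inl rfl)⟩
    · intro q hq
      rcases h3 q hq with h | ⟨i, hi, hi'⟩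
      · exact Or.inl h
      · exact Or.inr ⟨hgood _ _ y i hry hSy hi hi', hdl, Or.inr (Or.inl rfl)⟩
    · intro q hq
      obtain ⟨j, -, i, hi, hi'⟩ := h4 q hq
      have hg := hgσ _ _ _ _ (hgood _ _ y i hry hSy hi hi')
      have hmem := hT'ext p.1 hpT q (hVisT _ hg.1)
      exact ⟨σ p.1 q, hmem, hg, hmem, Or.inr (Or.inr ⟨q, rfl⟩)⟩
    · intro q hq j hj
      obtain ⟨i, hi, hi'⟩ := h5 q hq j hj.1
      obtain ⟨q', hq'⟩ := hj.2 p.1 j List.prefix_rfl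
      exact ⟨hgood _ _ y i hry hSy hi hi', hj, Or.inr (Or.inr ⟨q', by rw [← hq']⟩)⟩
  -- coding of positions as letters
  obtain ⟨e, d, hde⟩ : ∃ (e : Node × Q → ℕ+) (d : ℕ+ → Node × Q), ∀ p, d (e p) = p := by
    haveI : Nonempty (Node × Q) := ⟨([], A.init)⟩
    obtain ⟨f, hf⟩ := exists_injective_nat (Node × Q)
    have hinj : Function.Injective (fun p => (f p).succPNat) :=
      fun a b hab => hf (Nat.succPNat_injective hab)
    exact ⟨_, Function.invFun _, Function.leftInverse_invFun hinj⟩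
  set pos : Node → Node × Q := fun y => match y.getLast? with
    | none => ([], A.init)
    | some i => d i with hpos
  have hpos0 : pos [] = ([], A.init) := rfl
  have hpos1 : ∀ y i, pos (y ++ [i]) = d i := by
    intro y i
    simp [hpos]
  set Tr' : Set Node := {y | ∀ (u : Node) (i : ℕ+), u ++ [i] <+: y →
    E (pos u) (d i) ∧ i = e (d i)} with hTr'def
  have hTr'pc : ∀ w ∈ Tr', ∀ v : Node, v <+: w → v ∈ Tr' := fun w hw v hv u i h =>
    hw u i (h.trans hv)
  have hTr' : IsTree Tr' := by
    refine ⟨⟨[], fun u i h => by simp at h⟩, hTr'pc, fun w _ => ?_⟩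
    refine ((hEfin (pos w)).image e).subset fun i hi => ?_
    obtain ⟨h1, h2⟩ := hi w i List.prefix_rfl
    exact ⟨d i, h1, h2.symm⟩
  have hTr'ext : ∀ y ∈ Tr', ∀ t, E (pos y) t →
      ∃ i : ℕ+, y ++ [i] ∈ Tr' ∧ pos (y ++ [i]) = t := by
    intro y hy t ht
    refine ⟨e t, fun u i h => ?_, by rw [hpos1, hde]⟩
    rcases concat_prefix_concat h with ⟨rfl, rfl⟩ | h
    · rw [hde]
      exact ⟨ht, rfl⟩
    · exact hy u i h
  have hinv : ∀ y ∈ Tr', Vis (pos y) ∧ (pos y).1 ∈ T' := by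
    intro y hy
    rcases List.eq_nil_or_concat y with rfl | ⟨u, i, rfl⟩
    · exact ⟨⟨[], hnilTr, hrun.root⟩, hnilT'⟩
    · have := (hy u i (by simp)).1
      rw [List.concat_eq_append, hpos1]
      exact ⟨this.1.1, this.2.1⟩
  refine ⟨T', Lab, ⟨hT', Tr', pos, ⟨hTr', hpos0, fun y hy => (hinv y hy).2, ?_⟩, ?_⟩, ?_⟩
  · intro y hy
    obtain ⟨v, h0, h1, h2, h3, h4, h5⟩ := hstep (pos y) (hinv y hy).1 (hinv y hy).2
    refine ⟨v, h0, ?_, ?_, ?_, ?_, ?_⟩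
    · exact fun q hq => hTr'ext y hy _ (h1 q hq)
    · exact fun q hq => ⟨(h2 q hq).1, hTr'ext y hy _ (h2 q hq).2⟩
    · exact fun q hq => (h3 q hq).imp id (hTr'ext y hy _)
    · intro q hq
      obtain ⟨j, hj, hj'⟩ := h4 q hq
      exact ⟨j, hj, hTr'ext y hy _ hj'⟩
    · exact fun q hq j hj => hTr'ext y hy _ (h5 q hq j hj)
  · intro π hπ
    have hg : ∀ n, Good (pos (π n)) (pos (π (n+1))) := by
      intro n
      obtain ⟨h1, i, hi⟩ := hπ.2 n
      rw [hi] at h1 ⊢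
      rw [hpos1]
      exact (h1 _ i List.prefix_rfl).1.1
    exact parity_of_sig N (fun n => A.prio (pos (π n)).2) (fun n => hN _)
      (fun n => M (pos (π n))) (fun n => (hg n).2.1) (fun n => (hg n).2.2)
  · intro w _
    calc _ ≤ (Set.range (σ w)).ncard := Set.ncard_le_ncard (hsub w) (Set.finite_range _)
      _ ≤ (Set.univ : Set Q).ncard := by
        rw [← Set.image_univ]
        exact Set.ncard_image_le Set.finite_univ
      _ = Fintype.card Q := by rw [Set.ncard_univ, Nat.card_eq_fintype_card]

end TA
end
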